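/- Let P and Ω be symmetric positive-definite k×k real matrices, let λ_m > 0 and λ_M ≥ λ_m be the smallest and largest eigenvalues of P, let ω > 0 be the smallest eigenvalue of Ω, let r : ℝ → ℝᵏ be continuous with ‖r(t)‖ ≤ R for all t ≥ 0, and let z : ℝ → ℝᵏ be differentiable with z'(t) = −P Ω z(t) + P r(t) for all t ≥ 0. Then for all t ≥ 0, ‖z(t)‖ ≤ √(λ_M/λ_m) ( e^{−ω λ_m t} ‖z(0)‖ + R·λ_M/(ω λ_m) ); in particular z converges exponentially to a bounded set. -/

import Mathlib

open Matrix

/-- In an orthonormal eigenbasis, a Hermitian matrix multiplies coordinates by eigenvalues. -/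
theorem Matrix.IsHermitian.eigenvectorBasis_repr_toEuclideanLin {n : Type*} [Fintype n]
    [DecidableEq n] {A : Matrix n n ℝ} (hA : A.IsHermitian) (x : EuclideanSpace ℝ n) (i : n) :
    hA.eigenvectorBasis.repr (toEuclideanLin A x) i =
      hA.eigenvalues i * hA.eigenvectorBasis.repr x i := by
  have hsymm := isSymmetric_toEuclideanLin_iff.mpr hA
  have heig : toEuclideanLin A (hA.eigenvectorBasis i) =
      hA.eigenvalues i • hA.eigenvectorBasis i := by
    ext j
    simpa [toLpLin_apply] using congrFun (hA.mulVec_eigenvectorBasis i) j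
  rw [OrthonormalBasis.repr_apply_apply, OrthonormalBasis.repr_apply_apply, ← hsymm, heig,
    real_inner_smul_left]

theorem Matrix.IsHermitian.inner_toEuclideanLin_self {n : Type*} [Fintype n]
    [DecidableEq n] {A : Matrix n n ℝ} (hA : A.IsHermitian) (x : EuclideanSpace ℝ n) :
    inner ℝ (toEuclideanLin A x) x =
      ∑ i, hA.eigenvalues i * hA.eigenvectorBasis.repr x i ^ 2 := by
  rw [← hA.eigenvectorBasis.repr.inner_map_map, PiLp.inner_apply]
  refine Finset.sum_congr rfl fun i _ => ?_
  rw [hA.eigenvectorBasis_repr_toEuclideanLin]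
  simp only [RCLike.inner_apply, conj_trivial]
  ring

theorem Matrix.IsHermitian.norm_sq_toEuclideanLin {n : Type*} [Fintype n]
    [DecidableEq n] {A : Matrix n n ℝ} (hA : A.IsHermitian) (x : EuclideanSpace ℝ n) :
    ‖toEuclideanLin A x‖ ^ 2 =
      ∑ i, hA.eigenvalues i ^ 2 * hA.eigenvectorBasis.repr x i ^ 2 := by
  rw [← hA.eigenvectorBasis.repr.norm_map, EuclideanSpace.real_norm_sq_eq]
  refine Finset.sum_congr rfl fun i _ => ?_
  rw [hA.eigenvectorBasis_repr_toEuclideanLin, mul_pow]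

/-- Rayleigh quotient lower bound. -/
theorem Matrix.IsHermitian.mul_norm_sq_le_inner_toEuclideanLin {n : Type*} [Fintype n]
    [DecidableEq n] {A : Matrix n n ℝ} (hA : A.IsHermitian) {c : ℝ}
    (hc : ∀ i, c ≤ hA.eigenvalues i) (x : EuclideanSpace ℝ n) :
    c * ‖x‖ ^ 2 ≤ inner ℝ (toEuclideanLin A x) x := by
  rw [hA.inner_toEuclideanLin_self, ← hA.eigenvectorBasis.repr.norm_map x,
    EuclideanSpace.real_norm_sq_eq, Finset.mul_sum]
  exact Finset.sum_le_sum fun i _ => mul_le_mul_of_nonneg_right (hc i) (sq_nonneg _)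

theorem Matrix.PosDef.mul_inner_le_norm_sq_toEuclideanLin {n : Type*} [Fintype n]
    [DecidableEq n] {A : Matrix n n ℝ} (hA : A.PosDef) {c : ℝ}
    (hc : ∀ i, c ≤ hA.isHermitian.eigenvalues i) (x : EuclideanSpace ℝ n) :
    c * inner ℝ (toEuclideanLin A x) x ≤ ‖toEuclideanLin A x‖ ^ 2 := by
  rw [hA.isHermitian.inner_toEuclideanLin_self, hA.isHermitian.norm_sq_toEuclideanLin,
    Finset.mul_sum]
  refine Finset.sum_le_sum fun i _ => ?_
  rw [← mul_assoc, sq (hA.isHermitian.eigenvalues i)]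
  have := hA.eigenvalues_pos i
  gcongr
  exact hc i

theorem Matrix.PosDef.norm_sq_toEuclideanLin_le_mul_inner {n : Type*} [Fintype n]
    [DecidableEq n] {A : Matrix n n ℝ} (hA : A.PosDef) {c : ℝ}
    (hc : ∀ i, hA.isHermitian.eigenvalues i ≤ c) (x : EuclideanSpace ℝ n) :
    ‖toEuclideanLin A x‖ ^ 2 ≤ c * inner ℝ (toEuclideanLin A x) x := by
  rw [hA.isHermitian.inner_toEuclideanLin_self, hA.isHermitian.norm_sq_toEuclideanLin,
    Finset.mul_sum]
  refine Finset.sum_le_sum fun i _ => ?_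
  rw [← mul_assoc, sq (hA.isHermitian.eigenvalues i)]
  have := hA.eigenvalues_pos i
  gcongr
  exact hc i

/-- Comparison principle for `V' ≤ -2aV + 2c√V`. -/
theorem le_sq_of_deriv_le_neg_mul_add_sqrt {V V' : ℝ → ℝ} {a c w : ℝ} (ha : 0 < a)
    (hc : 0 ≤ c) (hw : 0 ≤ w) (hV : ∀ t, 0 ≤ t → HasDerivAt V (V' t) t)
    (hV' : ∀ t, 0 ≤ t → V' t ≤ -2 * a * V t + 2 * c * √(V t)) (h0 : V 0 ≤ w ^ 2)
    {t : ℝ} (ht : 0 ≤ t) : V t ≤ (Real.exp (-a * t) * w + c / a) ^ 2 := by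
  have key : ∀ d, c < d → V t ≤ (Real.exp (-a * t) * w + d / a) ^ 2 := by
    intro d hd
    have hd0 : 0 < d := hc.trans_lt hd
    let b : ℝ → ℝ := fun s => Real.exp (-a * s) * w + d / a
    have hb_pos : ∀ s, 0 < b s := fun s => by positivity
    have hb : ∀ s, HasDerivAt b (-a * b s + d) s := by
      intro s
      have h := ((((hasDerivAt_id s).const_mul (-a)).exp).mul_const w).add_const (d / a)
      refine h.congr_deriv ?_
      simp only [b, id]
      field_simp
      ring
    have hB : ∀ s, HasDerivAt (fun s => b s ^ 2) (2 * b s * (-a * b s + d)) s := by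
      intro s
      refine ((hb s).pow 2).congr_deriv ?_
      norm_num
    refine image_le_of_deriv_right_lt_deriv_boundary (a := 0) (b := t) (f := V) (f' := V')
      (fun s hs => (hV s hs.1).continuousAt.continuousWithinAt)
      (fun s hs => (hV s hs.1).hasDerivWithinAt) ?_ hB ?_ ⟨ht, le_rfl⟩
    · refine h0.trans (pow_le_pow_left₀ hw ?_ 2)
      simp only [b, mul_zero, Real.exp_zero, one_mul]
      exact le_add_of_nonneg_right (by positivity)
    · intro s hs hsB
      have h := hV' s hs.1
      rw [hsB, Real.sqrt_sq (hb_pos s).le] at h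
      nlinarith [mul_pos (hb_pos s) (sub_pos.mpr hd)]
  have hlim : Filter.Tendsto (fun d => (Real.exp (-a * t) * w + d / a) ^ 2)
      (nhdsWithin c (Set.Ioi c)) (nhds ((Real.exp (-a * t) * w + c / a) ^ 2)) :=
    (Continuous.tendsto (by fun_prop) c).mono_left nhdsWithin_le_nhds
  exact ge_of_tendsto hlim (Filter.eventually_of_mem self_mem_nhdsWithin key)

/-- Parameter-estimation part of the paper's Theorem 2: under the
concurrent-learning adaptive law the parameter error `z = θ̂ − θ*` obeys
`z' = −PΩz + Pr` with `P`, `Ω` symmetric positive definite, `λ_m`, `λ_M` the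
smallest/largest eigenvalues of `P`, `ω` the smallest eigenvalue of `Ω`, and
`‖r(t)‖ ≤ R`; then
`‖z(t)‖ ≤ √(λ_M/λ_m) (e^{−ω λ_m t}‖z(0)‖ + R λ_M/(ω λ_m))` for all `t ≥ 0`,
so `z` converges exponentially to a bounded set. -/
theorem concurrent_learning_parameter_error_bound
    {k : ℕ} (P Ω : Matrix (Fin k) (Fin k) ℝ)
    (hPsymm : P.IsSymm) (hPpd : P.PosDef)
    (hΩsymm : Ω.IsSymm) (hΩpd : Ω.PosDef)
    (lm lM : ℝ) (hlm : 0 < lm) (hlmM : lm ≤ lM)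
    (hPmin : IsLeast (Set.range hPpd.isHermitian.eigenvalues) lm)
    (hPmax : IsGreatest (Set.range hPpd.isHermitian.eigenvalues) lM)
    (ω : ℝ) (hω : 0 < ω)
    (hΩmin : IsLeast (Set.range hΩpd.isHermitian.eigenvalues) ω)
    (r z : ℝ → EuclideanSpace ℝ (Fin k))
    (hr : Continuous r)
    (R : ℝ) (hR : ∀ t, 0 ≤ t → ‖r t‖ ≤ R)
    (hz : ∀ t, 0 ≤ t →
      HasDerivAt z
        (-(Matrix.toEuclideanLin (P * Ω) (z t)) + Matrix.toEuclideanLin P (r t)) t) :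
    ∀ t, 0 ≤ t → ‖z t‖ ≤
      Real.sqrt (lM / lm) *
        (Real.exp (-(ω * lm) * t) * ‖z 0‖ + R * lM / (ω * lm)) := by
  intro t ht
  have hlM : 0 < lM := hlm.trans_le hlmM
  have hR0 : 0 ≤ R := (norm_nonneg _).trans (hR 0 le_rfl)
  have hdet : IsUnit P.det := hPpd.det_pos.ne'.isUnit
  have hPsa := isSymmetric_toEuclideanLin_iff.mpr hPpd.isHermitian
  let y : ℝ → EuclideanSpace ℝ (Fin k) := fun s => toEuclideanLin P⁻¹ (z s)
  let y' : ℝ → EuclideanSpace ℝ (Fin k) := fun s => -toEuclideanLin Ω (z s) + r s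
  have hPy : ∀ s, toEuclideanLin P (y s) = z s := fun s => by
    ext j
    simp [y, toLpLin_apply, mul_nonsing_inv P hdet]
  have hPy' : ∀ s, -toEuclideanLin (P * Ω) (z s) + toEuclideanLin P (r s) =
      toEuclideanLin P (y' s) := fun s => by
    ext j
    simp [y', toLpLin_apply, mulVec_add, mulVec_neg]
  have hy : ∀ s, 0 ≤ s → HasDerivAt y (y' s) s := by
    intro s hs
    have h := (LinearMap.toContinuousLinearMap (toEuclideanLin P⁻¹)).hasFDerivAt.comp_hasDerivAt s
      (hz s hs)
    refine h.congr_deriv ?_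
    rw [hPy']
    ext j
    simp [toLpLin_apply, nonsing_inv_mul P hdet]
  let V : ℝ → ℝ := fun s => inner ℝ (z s) (y s)
  have hV : ∀ s, 0 ≤ s → HasDerivAt V (2 * inner ℝ (y' s) (z s)) s := by
    intro s hs
    refine ((hz s hs).inner ℝ (hy s hs)).congr_deriv ?_
    rw [hPy', hPsa, hPy, real_inner_comm]
    ring
  have hVlow : ∀ s, lm * V s ≤ ‖z s‖ ^ 2 := fun s => by
    simpa only [hPy] using
      hPpd.mul_inner_le_norm_sq_toEuclideanLin (fun i => hPmin.2 ⟨i, rfl⟩) (y s)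
  have hVup : ∀ s, ‖z s‖ ^ 2 ≤ lM * V s := fun s => by
    simpa only [hPy] using
      hPpd.norm_sq_toEuclideanLin_le_mul_inner (fun i => hPmax.2 ⟨i, rfl⟩) (y s)
  have hzV : ∀ s, ‖z s‖ ≤ √lM * √(V s) := fun s => by
    rw [← Real.sqrt_mul hlM.le]
    exact Real.le_sqrt_of_sq_le (hVup s)
  have hV' : ∀ s, 0 ≤ s → 2 * inner ℝ (y' s) (z s) ≤
      -2 * (ω * lm) * V s + 2 * (R * √lM) * √(V s) := by
    intro s hs
    have hΩz := hΩpd.isHermitian.mul_norm_sq_le_inner_toEuclideanLin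
      (fun i => hΩmin.2 ⟨i, rfl⟩) (z s)
    have hrz : inner ℝ (r s) (z s) ≤ R * (√lM * √(V s)) :=
      (real_inner_le_norm _ _).trans (mul_le_mul (hR s hs) (hzV s) (norm_nonneg _) hR0)
    have hωV := mul_le_mul_of_nonneg_left (hVlow s) hω.le
    simp only [y', inner_add_left, inner_neg_left]
    linarith
  have hV0 : V 0 ≤ (‖z 0‖ / √lm) ^ 2 := by
    rw [div_pow, Real.sq_sqrt hlm.le, le_div_iff₀ hlm, mul_comm]
    exact hVlow 0
  have hVt := le_sq_of_deriv_le_neg_mul_add_sqrt (mul_pos hω hlm)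
    (mul_nonneg hR0 (Real.sqrt_nonneg lM)) (by positivity) hV hV' hV0 ht
  have hsqrt : 1 ≤ √(lM / lm) := by
    rw [Real.one_le_sqrt, one_le_div hlm]
    exact hlmM
  calc ‖z t‖ ≤ √lM * √(V t) := hzV t
    _ ≤ √lM * (Real.exp (-(ω * lm) * t) * (‖z 0‖ / √lm) + R * √lM / (ω * lm)) := by
      gcongr
      exact Real.sqrt_le_iff.mpr ⟨by positivity, hVt⟩
    _ = √(lM / lm) * (Real.exp (-(ω * lm) * t) * ‖z 0‖) + 1 * (R * lM / (ω * lm)) := by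
      rw [Real.sqrt_div hlM.le]
      linear_combination (R / (ω * lm)) * Real.mul_self_sqrt hlM.le
    _ ≤ √(lM / lm) * (Real.exp (-(ω * lm) * t) * ‖z 0‖ + R * lM / (ω * lm)) := by
      rw [mul_add]
      gcongr
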